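/- Degree theorem for possibly disconnected graphs: for any (D+1)-tuple σ of permutations of {1,…,k} there exists a nonnegative integer ω (the degree of σ, equal to the sum of the degrees of its connected components) such that 2·ω = (D−1)! · ( D(D−1)/2 · k + D·C(σ) − F(σ) ). In particular F(σ) ≤ D(D−1)/2 · k + D·C(σ). -/

import Mathlib

/-- Number of cycles of a permutation counting fixed points: the number of orbits
on `Fin k` of the cyclic group generated by `τ`. -/
noncomputable def cycleCount {k : ℕ} (τ : Equiv.Perm (Fin k)) : ℕ :=
  Nat.card (MulAction.orbitRel.Quotient (Subgroup.zpowers τ) (Fin k))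

/-- Total number of faces of the `(D+1)`-colored graph encoded by `σ`:
`F(σ) = Σ_{c₁ < c₂} c(σ⁽ᶜ¹⁾ ∘ (σ⁽ᶜ²⁾)⁻¹)`. -/
noncomputable def faceCount {k D : ℕ} (σ : Fin (D + 1) → Equiv.Perm (Fin k)) : ℕ :=
  ∑ p ∈ Finset.univ.filter (fun p : Fin (D + 1) × Fin (D + 1) => p.1 < p.2),
    cycleCount (σ p.1 * (σ p.2)⁻¹)

/-- Number of connected components of the `(D+1)`-colored graph encoded by `σ`:
the number of orbits on `Fin k` of the subgroup generated by `(σ⁽⁰⁾)⁻¹ ∘ σ⁽ᶜ⁾`, `1 ≤ c ≤ D`. -/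
noncomputable def compCount {k D : ℕ} (σ : Fin (D + 1) → Equiv.Perm (Fin k)) : ℕ :=
  Nat.card (MulAction.orbitRel.Quotient
    (Subgroup.closure
      {g : Equiv.Perm (Fin k) | ∃ c : Fin (D + 1), c ≠ 0 ∧ g = (σ 0)⁻¹ * σ c}) (Fin k))

/-!
A jacket of a colored graph is the ribbon graph given by a cyclic order `τ` on the colors, with one
face for each face of the colored graph whose two colors are consecutive for `τ`. The degree is the
sum of the genera of the jackets, so what has to be shown is that each genus is a nonnegative
integer.

For nonnegativity, let `d i` send a function `u` on the black vertices to `u ∘ σ i - u ∘ σ (τ i)`.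
The rank of `d i` is `k` minus the number of faces of colors `i` and `τ i`, the common kernel of the
`d i` and the common cokernel both have the number of connected components as dimension, and
`∑ i, d i = 0`; a dimension count in the resulting complex is then the bound `g ≥ 0`.
For integrality, compare the signs in `∏ i, σ i * (σ (τ i))⁻¹`, in which each `σ i` occurs twice.

A pair of distinct colors is of the form `(i, τ i)` for `(D - 1)!` of the `D!` cyclic orders `τ`, so
summing Euler's formula over the jackets yields the asserted value of the degree.
-/

open Equiv Module

section LinearAlgebra

variable {K V W ι : Type*} [Field K] [AddCommGroup V] [Module K V] [AddCommGroup W] [Module K W]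
  [FiniteDimensional K V] [Fintype ι]

/-- The maps `d i` form a complex `V → ∏ i, (d i).range → W`; its homology in the middle is the
slack of the inequality. -/
theorem finrank_add_finrank_iSup_range_le {d : ι → V →ₗ[K] W} (hd : ∑ i, d i = 0) :
    finrank K V + finrank K ↥(⨆ i, (d i).range) ≤
      ∑ i, finrank K ((d i).range) + finrank K ↥(⨅ i, (d i).ker) := by
  classical
  let β : V →ₗ[K] ∀ i, (d i).range := LinearMap.pi fun i => (d i).rangeRestrict
  let δ : (∀ i, (d i).range) →ₗ[K] W := LinearMap.lsum K _ K fun i => ((d i).range).subtype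
  have hker_β : β.ker = ⨅ i, (d i).ker := by
    simp only [β, LinearMap.ker_pi, LinearMap.ker_rangeRestrict]
  have hrange_δ : ⨆ i, (d i).range ≤ δ.range := iSup_le fun i w hw =>
    ⟨Pi.single i ⟨w, hw⟩, by simp [δ, LinearMap.lsum_piSingle, -LinearMap.lsum_apply]⟩
  have hcomplex : β.range ≤ δ.ker := by
    rintro _ ⟨v, rfl⟩
    simpa [β, δ] using LinearMap.congr_fun hd v
  have hβ := β.finrank_range_add_finrank_ker
  have hδ := δ.finrank_range_add_finrank_ker
  rw [hker_β] at hβ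
  rw [finrank_pi_fintype] at hδ
  have hmono := Submodule.finrank_mono hcomplex
  have hmono' := Submodule.finrank_mono hrange_δ
  lia

end LinearAlgebra

section Orbits

variable {α : Type*}

/-- The number of orbits of a permutation group; `cycleCount τ` unfolds to
`orbitCount (Subgroup.zpowers τ)`. -/
noncomputable def orbitCount (G : Subgroup (Perm α)) : ℕ :=
  Nat.card (MulAction.orbitRel.Quotient G α)

theorem apply_eq_of_mem_closure {β : Type*} {S : Set (Perm α)} {f : α → β}
    (hf : ∀ g ∈ S, ∀ x, f (g x) = f x) {g : Perm α} (hg : g ∈ Subgroup.closure S) (x : α) :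
    f (g x) = f x := by
  induction hg using Subgroup.closure_induction generalizing x with
  | mem g hg => exact hf g hg x
  | one => rfl
  | mul g h _ _ ihg ihh => rw [Perm.mul_apply, ihg, ihh]
  | inv g _ ih => simpa using (ih (g⁻¹ x)).symm

theorem apply_eq_of_isCycleOn_univ {β : Type*} {τ : Perm α} (hτ : τ.IsCycleOn Set.univ)
    {f : α → β} (hf : ∀ x, f x = f (τ x)) (x y : α) : f x = f y := by
  obtain ⟨n, rfl⟩ := hτ.2 (Set.mem_univ x) (Set.mem_univ y)
  have hmem : τ ^ n ∈ Subgroup.closure {τ} :=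
    zpow_mem (Subgroup.mem_closure_singleton_self τ) n
  exact (apply_eq_of_mem_closure (by simpa using fun x => (hf x).symm) hmem x).symm

variable (K : Type*) [Field K]

/-- The `K`-valued functions constant on the orbits of `G`, encoded as the functions pulled back
from the orbit space, so that their dimension is the number of orbits. -/
def invariantFunctions (G : Subgroup (Perm α)) : Submodule K (α → K) :=
  (LinearMap.funLeft K K (Quotient.mk _ : α → MulAction.orbitRel.Quotient G α)).range

variable {K}

theorem mem_invariantFunctions {G : Subgroup (Perm α)} {u : α → K} :
    u ∈ invariantFunctions K G ↔ ∀ g ∈ G, ∀ x, u (g x) = u x := by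
  constructor
  · rintro ⟨f, rfl⟩ g hg x
    exact congrArg f (Quotient.sound ⟨⟨g, hg⟩, rfl⟩)
  · intro hu
    refine ⟨Quotient.lift u ?_, rfl⟩
    rintro _ y ⟨g, rfl⟩
    exact hu g g.2 y

theorem mem_invariantFunctions_closure {S : Set (Perm α)} {u : α → K} :
    u ∈ invariantFunctions K (Subgroup.closure S) ↔ ∀ g ∈ S, ∀ x, u (g x) = u x :=
  mem_invariantFunctions.trans
    ⟨fun hu g hg => hu g (Subgroup.subset_closure hg), fun hu _ => apply_eq_of_mem_closure hu⟩

variable [Finite α]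

variable (K) in
theorem finrank_invariantFunctions (G : Subgroup (Perm α)) :
    finrank K (invariantFunctions K G) = orbitCount G := by
  classical
  have : Finite (MulAction.orbitRel.Quotient G α) := Quotient.finite _
  have := Fintype.ofFinite (MulAction.orbitRel.Quotient G α)
  rw [invariantFunctions, LinearMap.finrank_range_of_inj
    (LinearMap.funLeft_injective_of_surjective K K _ Quotient.mk_surjective),
    finrank_fintype_fun_eq_card, orbitCount, Nat.card_eq_fintype_card]

theorem card_le_finrank_add_orbitCount [DecidableEq α] {S : Set (Perm α)} {U : Submodule K (α → K)}
    (hU : ∀ g ∈ S, ∀ x, U.mkQ (Pi.single (g x) 1) = U.mkQ (Pi.single x 1)) :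
    Nat.card α ≤ finrank K U + orbitCount (Subgroup.closure S) := by
  have := Fintype.ofFinite α
  let Q := MulAction.orbitRel.Quotient (Subgroup.closure S) α
  have : Finite Q := Quotient.finite _
  have := Fintype.ofFinite Q
  let b (x : α) : (α → K) ⧸ U := U.mkQ (Pi.single x 1)
  let b' : Q → (α → K) ⧸ U := Quotient.lift b <| by
    rintro _ y ⟨g, rfl⟩
    exact apply_eq_of_mem_closure (f := b) hU g.2 y
  have hspan : Submodule.span K (Set.range b') = ⊤ := by
    have hrange : Set.range b' = U.mkQ '' Set.range fun x => Pi.single x 1 := by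
      rw [← Set.range_comp, ← Quotient.mk_surjective.range_comp b']
      rfl
    rw [hrange, Submodule.span_image, ← funext (Pi.basisFun_apply K α), (Pi.basisFun K α).span_eq,
      Submodule.map_top, Submodule.range_mkQ]
  have hquot : finrank K ((α → K) ⧸ U) ≤ orbitCount (Subgroup.closure S) := by
    rw [← finrank_top, ← hspan, orbitCount, Nat.card_eq_fintype_card]
    exact finrank_range_le_card b'
  have := U.finrank_quotient_add_finrank
  rw [finrank_fintype_fun_eq_card, ← Nat.card_eq_fintype_card] at this
  lia

theorem finrank_range_funLeft_sub_add_orbitCount (g h : Perm α) :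
    finrank K (LinearMap.funLeft K K g - LinearMap.funLeft K K h).range +
      orbitCount (Subgroup.zpowers (g * h⁻¹)) = Nat.card α := by
  have := Fintype.ofFinite α
  have hker : (LinearMap.funLeft K K g - LinearMap.funLeft K K h).ker =
      invariantFunctions K (Subgroup.zpowers (g * h⁻¹)) := by
    ext u
    rw [Subgroup.zpowers_eq_closure, mem_invariantFunctions_closure, LinearMap.mem_ker,
      LinearMap.sub_apply, sub_eq_zero, funext_iff, ← h.symm.forall_congr_right]
    simp [LinearMap.funLeft_apply]
  rw [← finrank_invariantFunctions K, ← hker, LinearMap.finrank_range_add_finrank_ker,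
    finrank_fintype_fun_eq_card, Nat.card_eq_fintype_card]

end Orbits

section Sign

variable {α : Type*} [Fintype α] [DecidableEq α]

/-- The class of a point under `Perm.SameCycle`: the point itself if it is fixed, the cycle through
it otherwise. -/
def cycleLabel (τ : Perm α) (x : α) : α ⊕ Perm α :=
  if x ∈ τ.support then .inr (τ.cycleOf x) else .inl x

theorem cycleLabel_eq_iff {τ : Perm α} {x y : α} :
    cycleLabel τ x = cycleLabel τ y ↔ τ.SameCycle x y := by
  constructor
  · intro h
    by_cases hx : x ∈ τ.support <;> by_cases hy : y ∈ τ.support <;>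
      simp only [cycleLabel, if_pos, if_neg, hx, hy, not_false_eq_true, reduceCtorEq,
        Sum.inl.injEq, Sum.inr.injEq] at h
    · exact (Perm.sameCycle_iff_cycleOf_eq_of_mem_support hx hy).2 h
    · exact h.sameCycle τ
  · intro h
    by_cases hx : x ∈ τ.support
    · rw [cycleLabel, cycleLabel, if_pos hx, if_pos (h.mem_support_iff.1 hx), h.cycleOf_eq]
    · rw [h.eq_of_left (Perm.notMem_support.1 hx)]

theorem image_cycleLabel (τ : Perm α) :
    Finset.univ.image (cycleLabel τ) = τ.supportᶜ.disjSum τ.cycleFactorsFinset := by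
  ext (x | c)
  · simp only [Finset.mem_image, Finset.mem_univ, true_and, Finset.inl_mem_disjSum,
      Finset.mem_compl, cycleLabel]
    grind
  · simp only [Finset.mem_image, Finset.mem_univ, true_and, Finset.inr_mem_disjSum, cycleLabel]
    constructor
    · rintro ⟨x, hx⟩
      split_ifs at hx with hxτ
      rw [← Sum.inr.inj hx]
      exact Perm.cycleOf_mem_cycleFactorsFinset_iff.2 hxτ
    · intro hc
      obtain ⟨x, hx⟩ := (Perm.mem_cycleFactorsFinset_iff.1 hc).1.nonempty_support
      use x
      rw [if_pos (Perm.mem_cycleFactorsFinset_support_le hc hx), Perm.cycle_is_cycleOf hx hc]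

theorem orbitCount_zpowers (τ : Perm α) :
    orbitCount (Subgroup.zpowers τ) = τ.supportᶜ.card + τ.cycleType.card := by
  have hker : MulAction.orbitRel (Subgroup.zpowers τ) α = Setoid.ker (cycleLabel τ) := by
    ext x y
    rw [Setoid.ker_def, cycleLabel_eq_iff, Perm.sameCycle_comm]
    simp [MulAction.orbitRel_apply, MulAction.mem_orbit_iff, Perm.SameCycle, Subgroup.smul_def]
  rw [orbitCount, MulAction.orbitRel.Quotient, hker,
    Nat.card_congr (Setoid.quotientKerEquivRange (cycleLabel τ)), Perm.cycleType_def,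
    Multiset.card_map, Finset.card_val, ← Finset.card_disjSum, ← image_cycleLabel,
    ← Set.ncard_coe_finset, Finset.coe_image, Finset.coe_univ, Set.image_univ,
    Nat.card_coe_set_eq]

theorem sign_eq_neg_one_pow_card_add_orbitCount (τ : Perm α) :
    Perm.sign τ = (-1) ^ (Fintype.card α + orbitCount (Subgroup.zpowers τ)) := by
  rw [Perm.sign_of_cycleType, Perm.sum_cycleType, orbitCount_zpowers,
    ← τ.support.card_add_card_compl]
  refine neg_one_pow_congr ?_
  grind

end Sign

section Components

variable {α ι : Type*}

/-- The group whose orbits on the white vertices are the connected components of the colored graph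
encoded by `σ`. No base color is singled out, unlike in `compCount`. -/
def componentGroup (σ : ι → Perm α) : Subgroup (Perm α) :=
  Subgroup.closure (Set.range fun p : ι × ι => (σ p.1)⁻¹ * σ p.2)

theorem compCount_eq_orbitCount {k D : ℕ} (σ : Fin (D + 1) → Perm (Fin k)) :
    compCount σ = orbitCount (componentGroup σ) := by
  suffices h : Subgroup.closure {g | ∃ c, c ≠ 0 ∧ g = (σ 0)⁻¹ * σ c} = componentGroup σ by
    rw [compCount, h, orbitCount]
  apply le_antisymm <;> rw [componentGroup, Subgroup.closure_le]
  · rintro _ ⟨c, -, rfl⟩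
    exact Subgroup.subset_closure ⟨(0, c), rfl⟩
  · have hmem (c : Fin (D + 1)) :
        (σ 0)⁻¹ * σ c ∈ Subgroup.closure {g | ∃ c, c ≠ 0 ∧ g = (σ 0)⁻¹ * σ c} := by
      rcases eq_or_ne c 0 with rfl | hc
      · simp
      · exact Subgroup.subset_closure ⟨c, hc, rfl⟩
    rintro _ ⟨⟨i, j⟩, rfl⟩
    simpa [mul_assoc] using mul_mem (inv_mem (hmem i)) (hmem j)

variable [Finite α] {K : Type*} [Field K] {σ : ι → Perm α} {U : Submodule K (α → K)}

theorem finrank_le_orbitCount_componentGroup [Nonempty ι]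
    (hU : ∀ u ∈ U, ∀ i j, u ∘ σ i = u ∘ σ j) :
    finrank K U ≤ orbitCount (componentGroup σ) := by
  obtain ⟨i₀⟩ := ‹Nonempty ι›
  rw [← finrank_invariantFunctions K, ← (LinearEquiv.funCongrLeft K K (σ i₀)).finrank_map_eq U]
  refine Submodule.finrank_mono ?_
  rintro _ ⟨u, hu, rfl⟩
  rw [componentGroup, mem_invariantFunctions_closure]
  rintro _ ⟨⟨i, j⟩, rfl⟩ x
  calc u (σ i₀ (((σ i)⁻¹ * σ j) x)) = u (σ i (((σ i)⁻¹ * σ j) x)) := congrFun (hU u hu i₀ i) _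
    _ = u (σ j x) := by simp
    _ = u (σ i₀ x) := congrFun (hU u hu j i₀) x

theorem card_le_finrank_add_orbitCount_componentGroup [DecidableEq α]
    (hU : ∀ z i j, U.mkQ (Pi.single ((σ i)⁻¹ z) 1) = U.mkQ (Pi.single ((σ j)⁻¹ z) 1)) :
    Nat.card α ≤ finrank K U + orbitCount (componentGroup σ) := by
  refine card_le_finrank_add_orbitCount ?_
  rintro _ ⟨⟨i, j⟩, rfl⟩ x
  simpa using hU (σ j x) i j

end Components

section Jackets

variable {α ι : Type*} [Fintype ι]

/-- The number of faces of the jacket of `σ` attached to the cyclic order `τ` on the colors: the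
faces whose two colors are consecutive for `τ`. -/
noncomputable def jacketFaceCount (σ : ι → Perm α) (τ : Perm ι) : ℕ :=
  ∑ i, orbitCount (Subgroup.zpowers (σ i * (σ (τ i))⁻¹))

theorem jacketFaceCount_inv (σ : ι → Perm α) (τ : Perm ι) :
    jacketFaceCount σ τ⁻¹ = jacketFaceCount σ τ := by
  rw [jacketFaceCount, ← Equiv.sum_comp τ]
  refine Finset.sum_congr rfl fun i _ => ?_
  rw [← Subgroup.zpowers_inv, mul_inv_rev, inv_inv, Perm.inv_def, Equiv.symm_apply_apply]

theorem jacketFaceCount_add_le [Finite α] [Nonempty ι] (σ : ι → Perm α) {τ : Perm ι}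
    (hτ : τ.IsCycleOn Set.univ) :
    jacketFaceCount σ τ + 2 * Nat.card α ≤
      Fintype.card ι * Nat.card α + 2 * orbitCount (componentGroup σ) := by
  classical
  have := Fintype.ofFinite α
  let d (i : ι) : (α → ℚ) →ₗ[ℚ] (α → ℚ) :=
    LinearMap.funLeft ℚ ℚ (σ i) - LinearMap.funLeft ℚ ℚ (σ (τ i))
  have hd : ∑ i, d i = 0 := by
    rw [Finset.sum_sub_distrib, Equiv.sum_comp τ fun i => LinearMap.funLeft ℚ ℚ (σ i), sub_self]
  have hker : finrank ℚ ↥(⨅ i, (d i).ker) ≤ orbitCount (componentGroup σ) := by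
    refine finrank_le_orbitCount_componentGroup fun u hu => ?_
    refine apply_eq_of_isCycleOn_univ hτ (f := fun i => u ∘ σ i) fun i => ?_
    exact sub_eq_zero.1 ((Submodule.mem_iInf _).1 hu i)
  have hrange : Nat.card α ≤ finrank ℚ ↥(⨆ i, (d i).range) + orbitCount (componentGroup σ) := by
    refine card_le_finrank_add_orbitCount_componentGroup fun z => ?_
    refine apply_eq_of_isCycleOn_univ hτ fun i => (Submodule.Quotient.eq _).2 ?_
    refine Submodule.mem_iSup_of_mem i ⟨Pi.single z 1, ?_⟩
    ext x
    simp [d, LinearMap.funLeft_apply, Pi.single_apply, Equiv.eq_symm_apply]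
  have hrank : ∑ i, finrank ℚ (d i).range + jacketFaceCount σ τ =
      Fintype.card ι * Nat.card α := by
    rw [jacketFaceCount, ← Finset.sum_add_distrib,
      Finset.sum_congr rfl fun i _ => finrank_range_funLeft_sub_add_orbitCount (σ i) (σ (τ i))]
    simp
  have hEuler := finrank_add_finrank_iSup_range_le hd
  rw [finrank_fintype_fun_eq_card, ← Nat.card_eq_fintype_card] at hEuler
  lia

theorem even_jacketFaceCount_add [Finite α] (σ : ι → Perm α) (τ : Perm ι) :
    Even (jacketFaceCount σ τ + Fintype.card ι * Nat.card α) := by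
  classical
  have := Fintype.ofFinite α
  have hsign : ∏ i, Perm.sign (σ i * (σ (τ i))⁻¹) = 1 := by
    simp only [Perm.sign_mul, Perm.sign_inv, Finset.prod_mul_distrib,
      Equiv.prod_comp τ fun i => Perm.sign (σ i)]
    exact Int.units_mul_self _
  simp only [sign_eq_neg_one_pow_card_add_orbitCount, Finset.prod_pow_eq_pow_sum,
    Finset.sum_add_distrib, Finset.sum_const, Finset.card_univ, smul_eq_mul] at hsign
  rw [jacketFaceCount, add_comm, Nat.card_eq_fintype_card]
  exact (neg_one_pow_eq_one_iff_even (by decide)).1 hsign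

/-- The genus of the jacket of `σ` attached to the cyclic order `τ`, summed over the connected
components. It is read off Euler's formula, the jacket having `2 * Nat.card α` vertices and
`Fintype.card ι * Nat.card α` edges; neither the subtraction nor the division truncates when `τ` is
a single cycle. -/
noncomputable def jacketGenus (σ : ι → Perm α) (τ : Perm ι) : ℕ :=
  (Fintype.card ι * Nat.card α + 2 * orbitCount (componentGroup σ) -
    (jacketFaceCount σ τ + 2 * Nat.card α)) / 2

theorem jacketGenus_inv (σ : ι → Perm α) (τ : Perm ι) : jacketGenus σ τ⁻¹ = jacketGenus σ τ := by
  rw [jacketGenus, jacketFaceCount_inv, jacketGenus]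

theorem two_mul_jacketGenus_add [Finite α] [Nonempty ι] (σ : ι → Perm α) {τ : Perm ι}
    (hτ : τ.IsCycleOn Set.univ) :
    2 * jacketGenus σ τ + (jacketFaceCount σ τ + 2 * Nat.card α) =
      Fintype.card ι * Nat.card α + 2 * orbitCount (componentGroup σ) := by
  have hle := jacketFaceCount_add_le σ hτ
  have heven := even_jacketFaceCount_add σ τ
  rw [jacketGenus]
  grind

end Jackets

section CyclicOrders

variable {ι : Type*} [Fintype ι] [DecidableEq ι]

variable (ι) in
/-- The cyclic orders on `ι`, encoded by their successor permutations; when `ι` has a single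
element, the identity is not counted. -/
def cyclicOrders : Finset (Perm ι) :=
  {τ | τ.cycleType = {Fintype.card ι}}

theorem mem_cyclicOrders {τ : Perm ι} : τ ∈ cyclicOrders ι ↔ τ.cycleType = {Fintype.card ι} := by
  rw [cyclicOrders, Finset.mem_filter_univ]

theorem inv_mem_cyclicOrders {τ : Perm ι} (hτ : τ ∈ cyclicOrders ι) : τ⁻¹ ∈ cyclicOrders ι := by
  rwa [mem_cyclicOrders, Perm.cycleType_inv, ← mem_cyclicOrders]

theorem support_eq_univ_of_mem_cyclicOrders {τ : Perm ι} (hτ : τ ∈ cyclicOrders ι) :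
    τ.support = Finset.univ := by
  rw [← Finset.card_eq_iff_eq_univ, ← Perm.sum_cycleType, mem_cyclicOrders.1 hτ,
    Multiset.sum_singleton]

theorem apply_ne_of_mem_cyclicOrders {τ : Perm ι} (hτ : τ ∈ cyclicOrders ι) (i : ι) : τ i ≠ i := by
  rw [← Perm.mem_support, support_eq_univ_of_mem_cyclicOrders hτ]
  exact Finset.mem_univ i

theorem isCycleOn_univ_of_mem_cyclicOrders {τ : Perm ι} (hτ : τ ∈ cyclicOrders ι) :
    τ.IsCycleOn Set.univ := by
  have hcycle : τ.IsCycle := by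
    rw [← Perm.card_cycleType_eq_one, mem_cyclicOrders.1 hτ, Multiset.card_singleton]
  simpa [apply_ne_of_mem_cyclicOrders hτ] using hcycle.isCycleOn

theorem inv_ne_self_of_mem_cyclicOrders (hι : 3 ≤ Fintype.card ι) {τ : Perm ι}
    (hτ : τ ∈ cyclicOrders ι) : τ⁻¹ ≠ τ := by
  intro hinv
  have horder : orderOf τ = Fintype.card ι := by
    rw [← Perm.lcm_cycleType, mem_cyclicOrders.1 hτ, Multiset.lcm_singleton, normalize_eq]
  have hdvd : orderOf τ ∣ 2 := orderOf_dvd_of_pow_eq_one (by rw [sq, mul_eq_one_iff_inv_eq, hinv])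
  have := Nat.le_of_dvd two_pos hdvd
  lia

theorem card_cyclicOrders (hι : 2 ≤ Fintype.card ι) :
    (cyclicOrders ι).card = (Fintype.card ι - 1).factorial := by
  rw [cyclicOrders, Perm.card_of_cycleType_singleton hι le_rfl, Nat.choose_self, mul_one]

theorem card_filter_apply_eq_congr {i j i' j' : ι} (h : i ≠ j) (h' : i' ≠ j') :
    {τ ∈ cyclicOrders ι | τ i = j}.card = {τ ∈ cyclicOrders ι | τ i' = j'}.card := by
  obtain ⟨e, rfl, rfl⟩ :=
    MulAction.is_two_pretransitive_iff.1 (Perm.isMultiplyPretransitive ι 2) h h'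
  refine Finset.card_equiv (MulAut.conj e).toEquiv fun τ => ?_
  simp [mem_cyclicOrders, Perm.cycleType_conj]

theorem card_filter_apply_eq {i j : ι} (h : i ≠ j) :
    {τ ∈ cyclicOrders ι | τ i = j}.card = (Fintype.card ι - 2).factorial := by
  obtain ⟨m, hm⟩ : ∃ m, Fintype.card ι = m + 2 :=
    Nat.exists_eq_add_of_le' (Fintype.one_lt_card_iff.2 ⟨i, j, h⟩)
  have hfiber : (cyclicOrders ι).card =
      ∑ j' ∈ Finset.univ.erase i, {τ ∈ cyclicOrders ι | τ i = j'}.card :=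
    Finset.card_eq_sum_card_fiberwise fun τ hτ => by
      simpa using apply_ne_of_mem_cyclicOrders hτ i
  rw [card_cyclicOrders (by lia), Finset.sum_congr rfl fun j' hj' =>
    card_filter_apply_eq_congr (Finset.ne_of_mem_erase hj').symm h, Finset.sum_const,
    Finset.card_erase_of_mem (Finset.mem_univ i), Finset.card_univ, hm, smul_eq_mul,
    Nat.add_succ_sub_one, Nat.factorial_succ] at hfiber
  rw [hm, Nat.add_sub_cancel]
  exact (Nat.eq_of_mul_eq_mul_left m.succ_pos hfiber).symm

theorem sum_cyclicOrders_sum_apply (f : ι → ι → ℕ) :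
    ∑ τ ∈ cyclicOrders ι, ∑ i, f i (τ i) =
      (Fintype.card ι - 2).factorial * ∑ p ∈ Finset.univ.offDiag, f p.1 p.2 := by
  have hsum (τ : Perm ι) (hτ : τ ∈ cyclicOrders ι) :
      ∑ i, f i (τ i) = ∑ p ∈ Finset.univ.offDiag with τ p.1 = p.2, f p.1 p.2 :=
    Finset.sum_bij' (fun i _ => (i, τ i)) (fun p _ => p.1)
      (by simp [(apply_ne_of_mem_cyclicOrders hτ _).symm]) (by simp) (by simp) (by grind) (by simp)
  calc ∑ τ ∈ cyclicOrders ι, ∑ i, f i (τ i)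
      = ∑ τ ∈ cyclicOrders ι, ∑ p ∈ Finset.univ.offDiag with τ p.1 = p.2, f p.1 p.2 :=
        Finset.sum_congr rfl hsum
    _ = ∑ p ∈ Finset.univ.offDiag, ∑ τ ∈ cyclicOrders ι with τ p.1 = p.2, f p.1 p.2 :=
        Finset.sum_comm' fun τ p => by simp only [Finset.mem_filter]; tauto
    _ = ∑ p ∈ Finset.univ.offDiag, (Fintype.card ι - 2).factorial * f p.1 p.2 :=
        Finset.sum_congr rfl fun p hp => by
          rw [Finset.sum_const, card_filter_apply_eq (Finset.mem_offDiag.1 hp).2.2, smul_eq_mul]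
    _ = (Fintype.card ι - 2).factorial * ∑ p ∈ Finset.univ.offDiag, f p.1 p.2 :=
        (Finset.mul_sum _ _ _).symm

end CyclicOrders

section Degree

variable {α ι : Type*} [Fintype ι] [DecidableEq ι]

/-- The Gurau degree of the colored graph encoded by `σ`: the sum of the genera of its jackets. A
jacket is a cyclic order on the colors up to reversal, whence the division by two. -/
noncomputable def gurauDegree (σ : ι → Perm α) : ℕ :=
  (∑ τ ∈ cyclicOrders ι, jacketGenus σ τ) / 2

theorem even_sum_jacketGenus (hι : 3 ≤ Fintype.card ι) (σ : ι → Perm α) :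
    Even (∑ τ ∈ cyclicOrders ι, jacketGenus σ τ) := by
  rw [← ZMod.natCast_eq_zero_iff_even, Nat.cast_sum]
  exact Finset.sum_involution (fun τ _ => τ⁻¹)
    (fun τ _ => by rw [jacketGenus_inv, CharTwo.add_self_eq_zero])
    (fun τ hτ _ => inv_ne_self_of_mem_cyclicOrders hι hτ)
    (fun τ hτ => inv_mem_cyclicOrders hτ) fun τ _ => inv_inv τ

theorem four_mul_gurauDegree_add [Finite α] (hι : 3 ≤ Fintype.card ι) (σ : ι → Perm α) :
    4 * gurauDegree σ + ((Fintype.card ι - 2).factorial *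
        ∑ p ∈ Finset.univ.offDiag, orbitCount (Subgroup.zpowers (σ p.1 * (σ p.2)⁻¹)) +
          (Fintype.card ι - 1).factorial * (2 * Nat.card α)) =
      (Fintype.card ι - 1).factorial *
        (Fintype.card ι * Nat.card α + 2 * orbitCount (componentGroup σ)) := by
  have : Nonempty ι := Fintype.card_pos_iff.1 (by lia)
  have hdegree : 2 * gurauDegree σ = ∑ τ ∈ cyclicOrders ι, jacketGenus σ τ :=
    Nat.two_mul_div_two_of_even (even_sum_jacketGenus hι σ)
  have hsum := Finset.sum_congr rfl fun τ hτ =>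
    two_mul_jacketGenus_add σ (isCycleOn_univ_of_mem_cyclicOrders (τ := τ) hτ)
  simp only [Finset.sum_add_distrib, ← Finset.mul_sum, ← hdegree, jacketFaceCount,
    sum_cyclicOrders_sum_apply fun i j => orbitCount (Subgroup.zpowers (σ i * (σ j)⁻¹)),
    Finset.sum_const, card_cyclicOrders (ι := ι) (by lia), smul_eq_mul] at hsum
  linarith

end Degree

theorem sum_offDiag_eq_two_mul_sum_lt {ι : Type*} [Fintype ι] [LinearOrder ι] {f : ι → ι → ℕ}
    (hf : ∀ i j, f i j = f j i) :
    ∑ p ∈ Finset.univ.offDiag, f p.1 p.2 = 2 * ∑ p : ι × ι with p.1 < p.2, f p.1 p.2 := by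
  have hlt : {p ∈ (Finset.univ : Finset ι).offDiag | p.1 < p.2} =
      ({p | p.1 < p.2} : Finset (ι × ι)) := by
    grind
  have hgt : ∑ p ∈ Finset.univ.offDiag with ¬ p.1 < p.2, f p.1 p.2 =
      ∑ p : ι × ι with p.1 < p.2, f p.1 p.2 :=
    Finset.sum_equiv (Equiv.prodComm ι ι) (by grind) fun p _ => hf p.1 p.2
  rw [← Finset.sum_filter_add_sum_filter_not _ fun p : ι × ι => p.1 < p.2, hlt, hgt, two_mul]

theorem sum_offDiag_orbitCount_eq_two_mul_faceCount {k D : ℕ} (σ : Fin (D + 1) → Perm (Fin k)) :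
    ∑ p ∈ Finset.univ.offDiag, orbitCount (Subgroup.zpowers (σ p.1 * (σ p.2)⁻¹)) =
      2 * faceCount σ :=
  sum_offDiag_eq_two_mul_sum_lt (f := fun i j => orbitCount (Subgroup.zpowers (σ i * (σ j)⁻¹)))
    fun i j => by rw [← Subgroup.zpowers_inv, mul_inv_rev, inv_inv]

theorem two_mul_gurauDegree {k D : ℕ} (hD : 2 ≤ D) (σ : Fin (D + 1) → Perm (Fin k)) :
    (2 : ℤ) * gurauDegree σ = ((D - 1).factorial : ℤ) *
      ((D * (D - 1) / 2 : ℕ) * k + D * compCount σ - (faceCount σ : ℤ)) := by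
  have hsum := four_mul_gurauDegree_add (by simpa using hD) σ
  obtain ⟨m, rfl⟩ := Nat.exists_eq_add_of_le' (one_le_two.trans hD)
  have htriangle : (m + 1) * m / 2 * 2 = (m + 1) * m :=
    Nat.div_mul_cancel (Nat.even_mul_pred_self (m + 1)).two_dvd
  rw [sum_offDiag_orbitCount_eq_two_mul_faceCount, ← compCount_eq_orbitCount] at hsum
  simp only [Fintype.card_fin, Nat.card_fin, Nat.add_sub_cancel, Nat.factorial_succ,
    show m + 1 + 1 - 2 = m from rfl] at hsum ⊢
  generalize (m + 1) * m / 2 = E at htriangle ⊢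
  zify at hsum htriangle
  push_cast
  refine mul_left_cancel₀ (two_ne_zero (α := ℤ)) ?_
  linear_combination hsum - (m.factorial : ℤ) * k * htriangle

/-- Degree theorem, possibly disconnected case: there is a nonnegative integer `ω`
(the degree of `σ`) with `2·ω = (D−1)! · (D(D−1)/2 · k + D·C(σ) − F(σ))`;
in particular `F(σ) ≤ D(D−1)/2 · k + D·C(σ)`. -/
theorem degree_theorem (k D : ℕ) (hk : 1 ≤ k) (hD : 2 ≤ D)
    (σ : Fin (D + 1) → Equiv.Perm (Fin k)) :
    (∃ ω : ℕ, (2 : ℤ) * ω =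
        (Nat.factorial (D - 1) : ℤ) *
          ((D * (D - 1) / 2 : ℕ) * k + D * compCount σ - (faceCount σ : ℤ))) ∧
      faceCount σ ≤ D * (D - 1) / 2 * k + D * compCount σ := by
  have hdegree := two_mul_gurauDegree hD σ
  refine ⟨⟨gurauDegree σ, hdegree⟩, ?_⟩
  have hfactorial : (0 : ℤ) < (D - 1).factorial := mod_cast (D - 1).factorial_pos
  have hprod : (0 : ℤ) ≤ 2 * gurauDegree σ := by positivity
  rw [hdegree] at hprod
  exact_mod_cast sub_nonneg.1 (nonneg_of_mul_nonneg_right hprod hfactorial)
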